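/- arXiv:1802.00969 — 6 statements merged into one kernel-verified Lean document; each statement's English description precedes it below -/
import Mathlib

section
/- Let V and W be H-modules, each finite-dimensional over F and indecomposable, and assume V and W are not isomorphic as H-modules. Then for every s ∈ ℕ and all families of H-linear maps f_1, …, f_s : V → W and g_1, …, g_s : W → V, the endomorphism Σ_{l=1}^{s} g_l ∘ f_l lies in the Jacobson radical of the endomorphism ring End_H(V); in particular it is not a unit of End_H(V). -/
/-- An `H`-module `M` is indecomposable if it is nonzero and whenever `p` and `q` are
complementary submodules, one of them is trivial. -/
def IsIndecomposableModule (H : Type*) [Ring H] (M : Type*) [AddCommGroup M]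
    [Module H M] : Prop :=
  (∃ x : M, x ≠ 0) ∧
    ∀ p q : Submodule H M, p ⊓ q = ⊥ → p ⊔ q = ⊤ → p = ⊥ ∨ q = ⊥

/-- **Fitting's lemma**: an endomorphism of an indecomposable module of finite length is either
a unit or nilpotent. -/
theorem IsIndecomposableModule.isUnit_or_isNilpotent {H : Type*} [Ring H] {M : Type*}
    [AddCommGroup M] [Module H M] [IsArtinian H M] [IsNoetherian H M]
    (hM : IsIndecomposableModule H M) (φ : Module.End H M) : IsUnit φ ∨ IsNilpotent φ := by
  obtain ⟨n, hn⟩ := Filter.eventually_atTop.mp φ.eventually_isCompl_ker_pow_range_pow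
  have hc := hn (n + 1) n.le_succ
  rcases hM.2 _ _ hc.inf_eq_bot hc.sup_eq_top with h | h
  · left
    have hr : LinearMap.range (φ ^ (n + 1)) = ⊤ := by simpa [h] using hc.sup_eq_top
    exact (isUnit_pow_iff n.succ_ne_zero).mp
      ((Module.End.isUnit_iff _).mpr ⟨LinearMap.ker_eq_bot.mp h, LinearMap.range_eq_top.mp hr⟩)
  · exact .inr ⟨n + 1, LinearMap.range_eq_bot.mp h⟩

/-- A nonzero module that is a retract of an indecomposable module is isomorphic to it. -/
theorem IsIndecomposableModule.nonempty_linearEquiv_of_isUnit_comp {H : Type*} [Ring H]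
    {V W : Type*} [AddCommGroup V] [Module H V] [AddCommGroup W] [Module H W] [Nontrivial V]
    (hW : IsIndecomposableModule H W) (f : V →ₗ[H] W) (g : W →ₗ[H] V)
    (h : IsUnit (g.comp f : Module.End H V)) : Nonempty (V ≃ₗ[H] W) := by
  have hb : Function.Bijective (g ∘ f) := (Module.End.isUnit_iff _).mp h
  have hf : Function.Injective f := hb.1.of_comp
  have hinf : LinearMap.range f ⊓ LinearMap.ker g = ⊥ := by
    rw [eq_bot_iff]
    rintro _ ⟨⟨v, rfl⟩, hv⟩
    have hv0 : v = 0 := hb.1 (by simpa using hv)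
    simp [hv0]
  have hsup : LinearMap.range f ⊔ LinearMap.ker g = ⊤ := by
    rw [eq_top_iff]
    intro w _
    obtain ⟨v, hv⟩ := hb.2 (g w)
    refine Submodule.mem_sup.mpr ⟨f v, ⟨v, rfl⟩, w - f v, ?_, by simp⟩
    simpa [sub_eq_zero] using hv.symm
  rcases hW.2 _ _ hinf hsup with h0 | h0
  · obtain ⟨v, hv⟩ := exists_ne (0 : V)
    have hfv : f v ∈ LinearMap.range f := ⟨v, rfl⟩
    rw [h0, Submodule.mem_bot] at hfv
    exact absurd (hf (hfv.trans f.map_zero.symm)) hv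
  · rw [h0, sup_bot_eq] at hsup
    exact ⟨.ofBijective f ⟨hf, LinearMap.range_eq_top.mp hsup⟩⟩

/-- If every left multiple of `x` is nilpotent, then `x` lies in the Jacobson radical. -/
theorem Ideal.mem_jacobson_bot_of_forall_isNilpotent_mul {R : Type*} [Ring R] {x : R}
    (hx : ∀ y : R, IsNilpotent (y * x)) : x ∈ (⊥ : Ideal R).jacobson := by
  refine Ideal.mem_jacobson_iff.mpr fun y => ?_
  obtain ⟨z, hz⟩ := (hx y).isUnit_add_one.exists_left_inv
  refine ⟨z, ?_⟩
  rw [Ideal.mem_bot, sub_eq_zero, ← hz]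
  noncomm_ring

theorem stmt1 (F : Type*) [Field F] (H : Type*) [Ring H] [Algebra F H]
    (V W : Type*)
    [AddCommGroup V] [Module H V] [Module F V] [IsScalarTower F H V] [FiniteDimensional F V]
    [AddCommGroup W] [Module H W] [Module F W] [IsScalarTower F H W] [FiniteDimensional F W]
    (hV : IsIndecomposableModule H V) (hW : IsIndecomposableModule H W)
    (hniso : ¬ Nonempty (V ≃ₗ[H] W))
    (s : ℕ) (f : Fin s → (V →ₗ[H] W)) (g : Fin s → (W →ₗ[H] V)) :
    ((∑ l, (g l).comp (f l) : Module.End H V) ∈ (⊥ : Ideal (Module.End H V)).jacobson) ∧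
      ¬ IsUnit (∑ l, (g l).comp (f l) : Module.End H V) := by
  have : IsArtinian H V := isArtinian_of_tower F inferInstance
  have : IsNoetherian H V := isNoetherian_of_tower F inferInstance
  have : Nontrivial V := nontrivial_iff_exists_ne 0 |>.mpr hV.1
  have hmem : (∑ l, (g l).comp (f l) : Module.End H V) ∈
      (⊥ : Ideal (Module.End H V)).jacobson := by
    refine Ideal.sum_mem _ fun l _ => Ideal.mem_jacobson_bot_of_forall_isNilpotent_mul fun y => ?_
    refine (hV.isUnit_or_isNilpotent _).resolve_left fun hu => hniso ?_
    exact hW.nonempty_linearEquiv_of_isUnit_comp (f l) (y.comp (g l)) hu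
  refine ⟨hmem, fun hu => ?_⟩
  exact bot_ne_top (Ideal.jacobson_eq_top_iff.mp (Ideal.eq_top_of_isUnit_mem _ hmem hu))
end

section
/- Let V and W be H-modules, each finite-dimensional over F and indecomposable, and assume V and W are not isomorphic as H-modules. Then for all H-linear maps f : V → W and g : W → V, the composite g ∘ f lies in the Jacobson radical of End_H(V); in particular g ∘ f is not a unit of End_H(V). -/
/-- Fitting's lemma: an endomorphism of an indecomposable module of finite length is either
nilpotent or a unit. -/
theorem IsIndecomposableModule.isNilpotent_or_isUnit {H M : Type*} [Ring H] [AddCommGroup M]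
    [Module H M] [IsNoetherian H M] [IsArtinian H M] (hM : IsIndecomposableModule H M)
    (φ : Module.End H M) : IsNilpotent φ ∨ IsUnit φ := by
  obtain ⟨n, hn⟩ := Filter.eventually_atTop.mp φ.eventually_isCompl_ker_pow_range_pow
  have hc := hn (n + 1) n.le_succ
  rcases hM.2 _ _ hc.inf_eq_bot hc.sup_eq_top with hker | hrange
  · right
    have hrange : LinearMap.range (φ ^ (n + 1)) = ⊤ := by simpa [hker] using hc.sup_eq_top
    refine (isUnit_pow_iff n.succ_ne_zero).mp ((Module.End.isUnit_iff _).mpr ?_)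
    exact ⟨LinearMap.ker_eq_bot.mp hker, LinearMap.range_eq_top.mp hrange⟩
  · exact Or.inl ⟨n + 1, LinearMap.range_eq_bot.mp hrange⟩

/-- A nonzero retract of an indecomposable module is the whole module. -/
theorem IsIndecomposableModule.nonempty_linearEquiv_of_comp_eq_id {H V W : Type*} [Ring H]
    [AddCommGroup V] [Module H V] [AddCommGroup W] [Module H W] [Nontrivial V]
    (hW : IsIndecomposableModule H W) {f : V →ₗ[H] W} {e : W →ₗ[H] V}
    (hef : e.comp f = LinearMap.id) : Nonempty (V ≃ₗ[H] W) := by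
  have hleft : Function.LeftInverse e f := LinearMap.congr_fun hef
  have hinf : LinearMap.range f ⊓ LinearMap.ker e = ⊥ := by
    rw [eq_bot_iff]
    rintro _ ⟨⟨v, rfl⟩, hv⟩
    have hv0 : v = 0 := by rw [← hleft v]; exact hv
    simp [hv0]
  have hsup : LinearMap.range f ⊔ LinearMap.ker e = ⊤ := by
    refine eq_top_iff.mpr fun w _ => Submodule.mem_sup.mpr
      ⟨f (e w), ⟨e w, rfl⟩, w - f (e w), ?_, add_sub_cancel _ _⟩
    simp [hleft (e w)]
  rcases hW.2 _ _ hinf hsup with hrange | hker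
  · obtain ⟨v, hv⟩ := exists_ne (0 : V)
    refine absurd ?_ hv
    rw [← hleft v, LinearMap.range_eq_bot.mp hrange, LinearMap.zero_apply, map_zero]
  · rw [hker, sup_bot_eq] at hsup
    exact ⟨LinearEquiv.ofBijective f ⟨hleft.injective, LinearMap.range_eq_top.mp hsup⟩⟩

/-- A composite through a non-isomorphic indecomposable module is not a unit. -/
theorem IsIndecomposableModule.not_isUnit_comp {H V W : Type*} [Ring H]
    [AddCommGroup V] [Module H V] [AddCommGroup W] [Module H W] [Nontrivial V]
    (hW : IsIndecomposableModule H W) (hniso : ¬ Nonempty (V ≃ₗ[H] W))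
    (f : V →ₗ[H] W) (g : W →ₗ[H] V) : ¬ IsUnit (g.comp f : Module.End H V) := by
  intro hu
  obtain ⟨b, hb⟩ := hu.exists_left_inv
  exact hniso (hW.nonempty_linearEquiv_of_comp_eq_id (f := f) (e := b.comp g) hb)

theorem stmt2 (F : Type*) [Field F] (H : Type*) [Ring H] [Algebra F H]
    (V W : Type*)
    [AddCommGroup V] [Module H V] [Module F V] [IsScalarTower F H V] [FiniteDimensional F V]
    [AddCommGroup W] [Module H W] [Module F W] [IsScalarTower F H W] [FiniteDimensional F W]
    (hV : IsIndecomposableModule H V) (hW : IsIndecomposableModule H W)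
    (hniso : ¬ Nonempty (V ≃ₗ[H] W))
    (f : V →ₗ[H] W) (g : W →ₗ[H] V) :
    ((g.comp f : Module.End H V) ∈ (⊥ : Ideal (Module.End H V)).jacobson) ∧
      ¬ IsUnit (g.comp f : Module.End H V) := by
  have : Nontrivial V := nontrivial_of_ne _ 0 hV.1.choose_spec
  have : IsNoetherian H V := isNoetherian_of_tower F inferInstance
  have : IsArtinian H V := isArtinian_of_tower F inferInstance
  refine ⟨Ideal.mem_jacobson_iff.mpr fun y => ?_, hW.not_isUnit_comp hniso f g⟩
  have hnil : IsNilpotent (y * g.comp f) :=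
    (hV.isNilpotent_or_isUnit _).resolve_right (hW.not_isUnit_comp hniso f (y.comp g))
  obtain ⟨z, hz⟩ := hnil.isUnit_add_one.exists_left_inv
  refine ⟨z, ?_⟩
  rw [Ideal.mem_bot, sub_eq_zero, mul_assoc, ← mul_add_one, hz]
end

section
/- Let V_1, …, V_n be pairwise non-isomorphic H-modules, each finite-dimensional over F and indecomposable. Let m, s : Fin n → ℕ and suppose the H-modules V^(m) = ⨁_{(i,k) : Σ i, Fin (m i)} V_i and V^(s) = ⨁_{(i,k) : Σ i, Fin (s i)} V_i are isomorphic as H-modules. Then m = s. -/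
namespace IsIndecomposableModule

variable {H M N : Type*} [Ring H] [AddCommGroup M] [Module H M] [AddCommGroup N] [Module H N]

theorem nontrivial (hM : IsIndecomposableModule H M) : Nontrivial M :=
  let ⟨x, hx⟩ := hM.1
  ⟨x, 0, hx⟩

/-- Fitting's lemma. -/
theorem isUnit_or_isNilpotent_s3 [IsNoetherian H M] [IsArtinian H M]
    (hM : IsIndecomposableModule H M) (f : Module.End H M) : IsUnit f ∨ IsNilpotent f := by
  obtain ⟨k, hk, hk0⟩ :=
    (f.eventually_isCompl_ker_pow_range_pow.and (Filter.eventually_ne_atTop 0)).exists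
  rcases hM.2 _ _ hk.inf_eq_bot hk.sup_eq_top with h | h
  · left
    rw [← isUnit_pow_iff hk0, Module.End.isUnit_iff]
    exact ⟨LinearMap.ker_eq_bot.mp h,
      LinearMap.range_eq_top.mp (by simpa [h] using hk.sup_eq_top)⟩
  · exact .inr ⟨k, LinearMap.range_eq_bot.mp h⟩

theorem nonempty_linearEquiv_of_isUnit_comp_s3 [Nontrivial M] [IsNoetherian H N] [IsArtinian H N]
    (hN : IsIndecomposableModule H N) {f : M →ₗ[H] N} {g : N →ₗ[H] M}
    (h : IsUnit (g ∘ₗ f : Module.End H M)) : Nonempty (M ≃ₗ[H] N) := by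
  rcases hN.isUnit_or_isNilpotent_s3 (f ∘ₗ g) with hfg | ⟨k, hk⟩
  · rw [Module.End.isUnit_iff, LinearMap.coe_comp] at h hfg
    exact ⟨.ofBijective f ⟨h.1.of_comp, hfg.2.of_comp⟩⟩
  · have hpow : ∀ k : ℕ, (g ∘ₗ f : Module.End H M) ^ (k + 1) =
        g ∘ₗ ((f ∘ₗ g : Module.End H N) ^ k : Module.End H N) ∘ₗ f := by
      intro k
      induction k with
      | zero => rw [pow_zero, zero_add, pow_one]; rfl
      | succ k ih => rw [pow_succ, ih, pow_succ]; rfl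
    have h0 := h.pow (k + 1)
    rw [hpow, hk, LinearMap.zero_comp, LinearMap.comp_zero] at h0
    exact absurd h0 not_isUnit_zero

/-- An endomorphism of an indecomposable module of finite length which factors through a
non-isomorphic one is in the Jacobson radical of the endomorphism ring. -/
theorem comp_mem_jacobson [IsNoetherian H M] [IsArtinian H M] [IsNoetherian H N] [IsArtinian H N]
    (hM : IsIndecomposableModule H M) (hN : IsIndecomposableModule H N)
    (hMN : ¬ Nonempty (M ≃ₗ[H] N)) (f : M →ₗ[H] N) (g : N →ₗ[H] M) :
    (g ∘ₗ f : Module.End H M) ∈ Ring.jacobson (Module.End H M) := by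
  have := hM.nontrivial
  rw [← Ideal.jacobson_bot, Ideal.mem_jacobson_iff]
  intro y
  have hnil : IsNilpotent (y * (g ∘ₗ f : Module.End H M)) :=
    (hM.isUnit_or_isNilpotent_s3 _).resolve_left fun h ↦
      hMN (hN.nonempty_linearEquiv_of_isUnit_comp_s3 (f := f) (g := y ∘ₗ g) h)
  obtain ⟨z, hz⟩ := hnil.isUnit_one_add.exists_left_inv
  refine ⟨z, ?_⟩
  rw [Ideal.mem_bot, mul_assoc, sub_eq_zero, ← hz, mul_add, mul_one, add_comm]

end IsIndecomposableModule

theorem isNoetherianRing_moduleEnd_of_finiteDimensional (F H M : Type*) [Field F] [Ring H]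
    [Algebra F H] [AddCommGroup M] [Module H M] [Module F M] [IsScalarTower F H M]
    [FiniteDimensional F M] : IsNoetherianRing (Module.End H M) := by
  have : SMulCommClass H F M := IsScalarTower.to_smulCommClass'
  have : IsNoetherian F (Module.End H M) :=
    isNoetherian_of_injective (LinearMap.restrictScalarsₗ F H M M F)
      (LinearMap.restrictScalars_injective F)
  exact isNoetherian_of_tower F this

section BlockMatrix

variable {H ι : Type*} [Ring H] [DecidableEq ι] {V : ι → Type*}
  [∀ i, AddCommGroup (V i)] [∀ i, Module H (V i)]

/-- The block at `i` of the matrix of a linear map between direct sums of copies of the modules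
`V i`, with entries taken modulo the Jacobson radical of the endomorphism ring of `V i`. -/
def residueBlock {a b : ι → ℕ} (i : ι)
    (f : (DirectSum (Σ i, Fin (a i)) fun p ↦ V p.1) →ₗ[H]
      DirectSum (Σ i, Fin (b i)) fun p ↦ V p.1) :
    Matrix (Fin (b i)) (Fin (a i))
      (Module.End H (V i) ⧸ Ring.jacobson (Module.End H (V i))) :=
  fun l k ↦ Ideal.Quotient.mk _
    (DirectSum.component H _ (fun p : Σ i, Fin (b i) ↦ V p.1) ⟨i, l⟩ ∘ₗ f ∘ₗ
      DirectSum.lof H _ (fun p : Σ i, Fin (a i) ↦ V p.1) ⟨i, k⟩)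

theorem residueBlock_id {a : ι → ℕ} (i : ι) :
    residueBlock i (LinearMap.id : (DirectSum (Σ i, Fin (a i)) fun p ↦ V p.1) →ₗ[H] _) = 1 := by
  ext l k
  rw [residueBlock, LinearMap.id_comp]
  rcases eq_or_ne l k with rfl | h
  · rw [DirectSum.component_comp_lof_same, Matrix.one_apply_eq]
    exact map_one _
  · rw [DirectSum.component_comp_lof, dif_neg (by simpa using h.symm), Matrix.one_apply_ne h,
      map_zero]

theorem residueBlock_comp [Fintype ι] [∀ i, IsNoetherian H (V i)] [∀ i, IsArtinian H (V i)]
    (hind : ∀ i, IsIndecomposableModule H (V i))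
    (hpair : ∀ i j, i ≠ j → ¬ Nonempty (V i ≃ₗ[H] V j)) {a b c : ι → ℕ} (i : ι)
    (g : (DirectSum (Σ i, Fin (b i)) fun p ↦ V p.1) →ₗ[H]
      DirectSum (Σ i, Fin (c i)) fun p ↦ V p.1)
    (f : (DirectSum (Σ i, Fin (a i)) fun p ↦ V p.1) →ₗ[H]
      DirectSum (Σ i, Fin (b i)) fun p ↦ V p.1) :
    residueBlock i (g ∘ₗ f) = residueBlock i g * residueBlock i f := by
  ext l k
  let u (p : Σ i, Fin (b i)) : V p.1 →ₗ[H] V i :=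
    DirectSum.component H _ (fun p : Σ i, Fin (c i) ↦ V p.1) ⟨i, l⟩ ∘ₗ g ∘ₗ
      DirectSum.lof H _ (fun p : Σ i, Fin (b i) ↦ V p.1) p
  let v (p : Σ i, Fin (b i)) : V i →ₗ[H] V p.1 :=
    DirectSum.component H _ (fun p : Σ i, Fin (b i) ↦ V p.1) p ∘ₗ f ∘ₗ
      DirectSum.lof H _ (fun p : Σ i, Fin (a i) ↦ V p.1) ⟨i, k⟩
  have hsum : DirectSum.component H _ (fun p : Σ i, Fin (c i) ↦ V p.1) ⟨i, l⟩ ∘ₗ (g ∘ₗ f) ∘ₗ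
      DirectSum.lof H _ (fun p : Σ i, Fin (a i) ↦ V p.1) ⟨i, k⟩ =
        ∑ p, (u p ∘ₗ v p : Module.End H (V i)) := by
    ext x
    rw [LinearMap.sum_apply]
    simp only [LinearMap.comp_apply, u, v]
    rw [← map_sum, ← map_sum]
    congr 2
    exact (DirectSum.sum_univ_of _).symm
  rw [residueBlock, hsum, map_sum, Fintype.sum_sigma, Matrix.mul_apply,
    Finset.sum_eq_single i]
  · exact Finset.sum_congr rfl fun _ _ ↦ map_mul _ _ _
  · intro j _ hj
    exact Finset.sum_eq_zero fun q _ ↦ Ideal.Quotient.eq_zero_iff_mem.mpr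
      ((hind i).comp_mem_jacobson (hind j) (hpair i j hj.symm) _ _)
  · simp

end BlockMatrix

theorem stmt3 (F : Type*) [Field F] (H : Type*) [Ring H] [Algebra F H]
    (n : ℕ) (V : Fin n → Type*)
    [∀ i, AddCommGroup (V i)] [∀ i, Module H (V i)]
    [∀ i, Module F (V i)] [∀ i, IsScalarTower F H (V i)]
    [∀ i, FiniteDimensional F (V i)]
    (hind : ∀ i, IsIndecomposableModule H (V i))
    (hpair : ∀ i j : Fin n, i ≠ j → ¬ Nonempty (V i ≃ₗ[H] V j))
    (m s : Fin n → ℕ)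
    (hiso : Nonempty
      ((DirectSum (Σ i : Fin n, Fin (m i)) fun p => V p.1) ≃ₗ[H]
        (DirectSum (Σ i : Fin n, Fin (s i)) fun p => V p.1))) :
    m = s := by
  have (i : Fin n) : IsNoetherian H (V i) := isNoetherian_of_tower F inferInstance
  have (i : Fin n) : IsArtinian H (V i) := isArtinian_of_tower F inferInstance
  obtain ⟨e⟩ := hiso
  ext i
  have := (hind i).nontrivial
  have := isNoetherianRing_moduleEnd_of_finiteDimensional F H (V i)
  have : Nontrivial (Module.End H (V i) ⧸ Ring.jacobson (Module.End H (V i))) :=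
    Ideal.Quotient.nontrivial_iff.mpr (Ring.jacobson_lt_top _).ne
  have : IsNoetherianRing (Module.End H (V i) ⧸ Ring.jacobson (Module.End H (V i))) :=
    isNoetherianRing_of_surjective _ _ (Ideal.Quotient.mk _) Ideal.Quotient.mk_surjective
  have hinv := residueBlock_comp hind hpair i e.symm.toLinearMap e.toLinearMap
  have hinv' := residueBlock_comp hind hpair i e.toLinearMap e.symm.toLinearMap
  rw [e.symm_comp, residueBlock_id] at hinv
  rw [e.comp_symm, residueBlock_id] at hinv'
  simpa using Matrix.square_of_invertible _ _ hinv.symm hinv'.symm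
end

section
/- Let V and W be H-modules, each finite-dimensional over F and indecomposable. Let s ∈ ℕ and suppose there exist H-linear maps f : V → (Fin s → W) and g : (Fin s → W) → V with g ∘ f = id_V (so V is a direct summand of the direct sum of s copies of W). Then V and W are isomorphic as H-modules. -/
/-- The endomorphism ring of an indecomposable module of finite length is local. -/
theorem IsIndecomposableModule.isLocalRing_end {H M : Type*} [Ring H] [AddCommGroup M]
    [Module H M] [IsArtinian H M] [IsNoetherian H M] (hM : IsIndecomposableModule H M) :
    IsLocalRing (Module.End H M) := by
  obtain ⟨⟨x, hx⟩, hdec⟩ := hM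
  have : Nontrivial M := ⟨x, 0, hx⟩
  refine IsLocalRing.of_isUnit_or_isUnit_one_sub_self fun f => ?_
  obtain ⟨n, hcompl, hn⟩ :=
    (f.eventually_isCompl_ker_pow_range_pow.and (Filter.eventually_ge_atTop 1)).exists
  rcases hdec _ _ hcompl.inf_eq_bot hcompl.sup_eq_top with hker | hrange
  · left
    have hrange : LinearMap.range (f ^ n) = ⊤ := by
      simpa [hker] using hcompl.sup_eq_top
    rw [← isUnit_pow_iff (Nat.one_le_iff_ne_zero.mp hn), Module.End.isUnit_iff]
    exact ⟨LinearMap.ker_eq_bot.mp hker, LinearMap.range_eq_top.mp hrange⟩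
  · right
    exact IsNilpotent.isUnit_one_sub ⟨n, LinearMap.range_eq_bot.mp hrange⟩

/-- If `b ∘ a` is bijective, the source of `a` is nonzero and the middle module is
indecomposable, then `b` is bijective. -/
theorem IsIndecomposableModule.bijective_of_bijective_comp {H M N P : Type*} [Ring H]
    [AddCommGroup M] [Module H M] [AddCommGroup N] [Module H N] [AddCommGroup P] [Module H P]
    [Nontrivial M] (hN : IsIndecomposableModule H N) (a : M →ₗ[H] N) (b : N →ₗ[H] P)
    (hba : Function.Bijective (b ∘ₗ a)) : Function.Bijective b := by
  have hsurj : Function.Surjective b := .of_comp (g := a) hba.2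
  refine ⟨?_, hsurj⟩
  have hinf : LinearMap.ker b ⊓ LinearMap.range a = ⊥ := by
    rw [eq_bot_iff]
    rintro _ ⟨hy, x, rfl⟩
    have hx : x = 0 := hba.1 (by simpa using hy)
    simp [hx]
  have hsup : LinearMap.ker b ⊔ LinearMap.range a = ⊤ := by
    rw [eq_top_iff]
    rintro y -
    obtain ⟨x, hx⟩ := hba.2 (b y)
    refine Submodule.mem_sup.mpr ⟨y - a x, ?_, a x, ⟨x, rfl⟩, sub_add_cancel _ _⟩
    simpa [sub_eq_zero] using hx.symm
  rcases hN.2 _ _ hinf hsup with hker | hrange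
  · exact LinearMap.ker_eq_bot.mp hker
  · obtain ⟨x, hx⟩ := exists_ne (0 : M)
    have ha : a = 0 := LinearMap.range_eq_bot.mp hrange
    exact absurd (hba.1 (by simp [ha])) hx

theorem stmt4 (F : Type*) [Field F] (H : Type*) [Ring H] [Algebra F H]
    (V W : Type*)
    [AddCommGroup V] [Module H V] [Module F V] [IsScalarTower F H V] [FiniteDimensional F V]
    [AddCommGroup W] [Module H W] [Module F W] [IsScalarTower F H W] [FiniteDimensional F W]
    (hV : IsIndecomposableModule H V) (hW : IsIndecomposableModule H W)
    (s : ℕ) (f : V →ₗ[H] (Fin s → W)) (g : (Fin s → W) →ₗ[H] V)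
    (hgf : g.comp f = LinearMap.id) :
    Nonempty (V ≃ₗ[H] W) := by
  have : IsArtinian H V := isArtinian_of_tower F inferInstance
  have : IsNoetherian H V := isNoetherian_of_tower F inferInstance
  have : IsLocalRing (Module.End H V) := hV.isLocalRing_end
  have : Nontrivial V := hV.1.elim fun x hx => ⟨x, 0, hx⟩
  let a (i : Fin s) : V →ₗ[H] W := LinearMap.proj i ∘ₗ f
  let b (i : Fin s) : W →ₗ[H] V := g ∘ₗ LinearMap.single H (fun _ => W) i
  have hsum : ∑ i, (b i ∘ₗ a i : Module.End H V) = 1 := by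
    ext v
    have hv : g (f v) = v := LinearMap.congr_fun hgf v
    simp only [a, b, LinearMap.sum_apply, LinearMap.comp_apply, LinearMap.proj_apply,
      LinearMap.single_apply, Module.End.one_apply]
    rw [← map_sum, Finset.univ_sum_single, hv]
  obtain ⟨i, -, hi⟩ := IsLocalRing.exists_of_isUnit_sum (hsum ▸ isUnit_one)
  exact ⟨(LinearEquiv.ofBijective (b i)
    (hW.bijective_of_bijective_comp (a i) (b i) ((Module.End.isUnit_iff _).mp hi))).symm⟩
end

section
/- Let A be a finite-dimensional F-algebra and e_1, …, e_n ∈ A idempotents with e_i·e_j = 0 for i ≠ j, e_1 + ⋯ + e_n = 1, each e_i a primitive idempotent, and such that for all i ≠ j and all x, y ∈ A, the element e_i·x·e_j·y·e_i lies in the Jacobson radical of A. Let m, s : Fin n → ℕ, set I(m) := Σ i : Fin n, Fin (m i) and I(s) := Σ i : Fin n, Fin (s i), and suppose X : Matrix I(m) I(s) A and Y : Matrix I(s) I(m) A satisfy: X a b = e_{a.1}·(X a b)·e_{b.1} and Y b a = e_{b.1}·(Y b a)·e_{a.1} for all indices, X·Y = E_m and Y·X = E_s, where E_m is the I(m) ×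 I(m) matrix with (E_m) a a = e_{a.1} and zero off the diagonal (and E_s likewise). Then m = s. -/
/-- An idempotent `e` of a ring is primitive if it is nonzero and cannot be written as a sum of
two nonzero orthogonal idempotents. -/
def IsPrimitiveIdempotent {R : Type*} [Ring R] (e : R) : Prop :=
  IsIdempotentElem e ∧ e ≠ 0 ∧
    ∀ f g : R, IsIdempotentElem f → IsIdempotentElem g → f * g = 0 → g * f = 0 →
      e = f + g → f = 0 ∨ g = 0

/-- Over a finite-dimensional algebra, a factorization `X * Y = diag(f, …, f)` through `s`
coordinates, with the entries of `Y` in `f B`, forces `m ≤ s`. -/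
theorem Matrix.le_of_mul_eq_diagonal_idempotent (F : Type*) [Field F] {B : Type*} [Ring B]
    [Algebra F B] [FiniteDimensional F B] {f : B} (hf : IsIdempotentElem f) (hf0 : f ≠ 0)
    {m s : ℕ} (X : Matrix (Fin m) (Fin s) B) (Y : Matrix (Fin s) (Fin m) B)
    (hY : ∀ b a, f * Y b a = Y b a) (hXY : X * Y = Matrix.diagonal fun _ => f) :
    m ≤ s := by
  let W : Submodule F B := LinearMap.range (LinearMap.mulLeft F f)
  have hW : ∀ w : W, f * (w : B) = w := by
    rintro ⟨_, v, rfl⟩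
    simp [← mul_assoc, hf.eq]
  have : Nontrivial W :=
    ⟨⟨⟨f, 1, by simp⟩, 0, fun h => hf0 (congrArg Subtype.val h)⟩⟩
  let T : (Fin m → W) →ₗ[F] (Fin s → W) :=
    { toFun := fun w b => ⟨∑ a, Y b a * (w a : B), ∑ a, Y b a * (w a : B), by
        simp [← mul_assoc, hY]⟩
      map_add' := fun v w => by
        ext b
        simp [mul_add, Finset.sum_add_distrib]
      map_smul' := fun c w => by
        ext b
        simp [Finset.smul_sum] }
  have hT : Function.Injective T := by
    rw [← LinearMap.ker_eq_bot, LinearMap.ker_eq_bot']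
    intro w hw
    have hYw : Y.mulVec (fun a => (w a : B)) = 0 := by
      funext b
      exact congrArg Subtype.val (congrFun hw b)
    have h := congrArg X.mulVec hYw
    rw [Matrix.mulVec_mulVec, hXY, Matrix.mulVec_zero] at h
    funext a
    apply Subtype.ext
    have ha := congrFun h a
    rwa [Matrix.mulVec_diagonal, hW] at ha
  have h := LinearMap.finrank_le_finrank_of_injective hT
  simp only [Module.finrank_pi_fintype, Finset.sum_const, Finset.card_univ, Fintype.card_fin,
    smul_eq_mul] at h
  exact Nat.le_of_mul_le_mul_right h Module.finrank_pos

/-- The Jacobson radical contains no nonzero idempotent. -/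
theorem IsIdempotentElem.eq_zero_of_mem_jacobson_bot {R : Type*} [Ring R] {e : R}
    (he : IsIdempotentElem e) (hmem : e ∈ (⊥ : Ideal R).jacobson) : e = 0 := by
  obtain ⟨z, hz⟩ := Ideal.mem_jacobson_iff.1 hmem (-1)
  have h := congrArg (· * e) (Ideal.mem_bot.1 hz)
  simpa [add_mul, sub_mul, mul_assoc, he.eq] using h

/-- The `i`-th diagonal block of a one-sided inverse pair of block matrices is a one-sided
inverse pair modulo the radical, whence the inequality of block sizes. -/
theorem block_size_le_of_mul_eq_diagonal (F : Type*) [Field F] {A : Type*} [Ring A] [Algebra F A]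
    [FiniteDimensional F A] {n : ℕ} {e : Fin n → A}
    (hidem : ∀ i, IsIdempotentElem (e i)) (hne : ∀ i, e i ≠ 0)
    (hrad : ∀ i j : Fin n, i ≠ j → ∀ x y : A,
      e i * x * e j * y * e i ∈ (⊥ : Ideal A).jacobson)
    {m s : Fin n → ℕ}
    (X : Matrix (Σ i : Fin n, Fin (m i)) (Σ i : Fin n, Fin (s i)) A)
    (Y : Matrix (Σ i : Fin n, Fin (s i)) (Σ i : Fin n, Fin (m i)) A)
    (hX : ∀ a b, X a b = e a.1 * X a b * e b.1)
    (hY : ∀ b a, Y b a = e b.1 * Y b a * e a.1)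
    (hXY : X * Y = Matrix.diagonal fun a => e a.1) (i : Fin n) :
    m i ≤ s i := by
  let J : Ideal A := (⊥ : Ideal A).jacobson
  let π : A →+* A ⧸ J := Ideal.Quotient.mk J
  have : FiniteDimensional F (A ⧸ J) :=
    Module.Finite.of_surjective (Ideal.Quotient.mkₐ F J).toLinearMap Ideal.Quotient.mk_surjective
  refine Matrix.le_of_mul_eq_diagonal_idempotent F (B := A ⧸ J) (f := π (e i))
    ((hidem i).map π) (fun h => hne i ?_)
    (Matrix.of fun a b => π (X ⟨i, a⟩ ⟨i, b⟩)) (Matrix.of fun b a => π (Y ⟨i, b⟩ ⟨i, a⟩)) ?_ ?_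
  · exact (hidem i).eq_zero_of_mem_jacobson_bot (Ideal.Quotient.eq_zero_iff_mem.1 h)
  · intro b a
    rw [Matrix.of_apply, ← map_mul, hY ⟨i, b⟩ ⟨i, a⟩, ← mul_assoc, ← mul_assoc, (hidem i).eq]
  · ext a a'
    have h := congrArg π (congrFun (congrFun hXY ⟨i, a⟩) ⟨i, a'⟩)
    rw [Matrix.mul_apply, Fintype.sum_sigma, map_sum, Finset.sum_eq_single i] at h
    · simpa [Matrix.mul_apply, Matrix.diagonal_apply, apply_ite π] using h
    · intro j _ hj
      refine Ideal.Quotient.eq_zero_iff_mem.2 (J.sum_mem fun b _ => ?_)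
      rw [hX ⟨i, a⟩ ⟨j, b⟩, hY ⟨j, b⟩ ⟨i, a'⟩]
      have := hrad i j hj.symm (X ⟨i, a⟩ ⟨j, b⟩) (Y ⟨j, b⟩ ⟨i, a'⟩)
      convert this using 1
      simp only [mul_assoc]
      rw [← mul_assoc (e j) (e j), (hidem j).eq]
    · simp

theorem stmt5 (F : Type*) [Field F] (A : Type*) [Ring A] [Algebra F A]
    [FiniteDimensional F A]
    (n : ℕ) (e : Fin n → A)
    (hidem : ∀ i, IsIdempotentElem (e i))
    (horth : ∀ i j : Fin n, i ≠ j → e i * e j = 0)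
    (hsum : ∑ i, e i = 1)
    (hprim : ∀ i, IsPrimitiveIdempotent (e i))
    (hrad : ∀ i j : Fin n, i ≠ j → ∀ x y : A,
      e i * x * e j * y * e i ∈ (⊥ : Ideal A).jacobson)
    (m s : Fin n → ℕ)
    (X : Matrix (Σ i : Fin n, Fin (m i)) (Σ i : Fin n, Fin (s i)) A)
    (Y : Matrix (Σ i : Fin n, Fin (s i)) (Σ i : Fin n, Fin (m i)) A)
    (hX : ∀ a b, X a b = e a.1 * X a b * e b.1)
    (hY : ∀ b a, Y b a = e b.1 * Y b a * e a.1)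
    (hXY : X * Y = Matrix.diagonal fun a => e a.1)
    (hYX : Y * X = Matrix.diagonal fun b => e b.1) :
    m = s := by
  have hne : ∀ i, e i ≠ 0 := fun i => (hprim i).2.1
  funext i
  exact le_antisymm (block_size_le_of_mul_eq_diagonal F hidem hne hrad X Y hX hY hXY i)
    (block_size_le_of_mul_eq_diagonal F hidem hne hrad Y X hY hX hYX i)
end

section
/- Let B be a (possibly noncommutative) local ring, i.e., B is nontrivial and for all a, b ∈ B with a + b = 1, a is a unit or b is a unit. Let m, s ∈ ℕ and suppose there exist matrices X : Matrix (Fin m) (Fin s) B and Y : Matrix (Fin s) (Fin m) B with X·Y = 1 (the m × m identity matrix over B). Then m ≤ s. -/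
/-- In a local ring, every right-invertible element is a unit. -/
theorem IsLocalRing.isUnit_of_mul_eq_one {B : Type*} [Ring B] [IsLocalRing B] {a b : B}
    (h : a * b = 1) : IsUnit a := by
  rcases IsLocalRing.isUnit_or_isUnit_of_add_one (add_sub_cancel (b * a) 1) with hu | hu
  · have hba : b * a = 1 := hu.mul_left_cancel (by rw [mul_assoc, ← mul_assoc a, h]; simp)
    exact ⟨⟨a, b, h, hba⟩, rfl⟩
  · have ha : a = 0 := hu.mul_left_eq_zero.mp (by rw [mul_sub, ← mul_assoc, h]; simp)
    simp [ha] at h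

/-- In a local ring, the left factor of a unit is a unit. -/
theorem IsLocalRing.isUnit_left_of_isUnit_mul {B : Type*} [Ring B] [IsLocalRing B] {a b : B}
    (h : IsUnit (a * b)) : IsUnit a := by
  obtain ⟨u, hu⟩ := h
  exact IsLocalRing.isUnit_of_mul_eq_one (b := b * ↑u⁻¹) (by rw [← mul_assoc, ← hu, u.mul_inv])

/-- Eliminating a row and a column of `X` through a unit pivot `X 0 k` preserves the existence of
a right inverse. -/
theorem Matrix.exists_mul_eq_one_of_isUnit_pivot {B : Type*} [Ring B] {m s : ℕ}
    {X : Matrix (Fin (m + 1)) (Fin (s + 1)) B} {Y : Matrix (Fin (s + 1)) (Fin (m + 1)) B}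
    (hXY : X * Y = 1) (k : Fin (s + 1)) (hk : IsUnit (X 0 k)) :
    ∃ (X' : Matrix (Fin m) (Fin s) B) (Y' : Matrix (Fin s) (Fin m) B), X' * Y' = 1 := by
  obtain ⟨p, hp⟩ := hk
  refine ⟨.of fun i j ↦ X i.succ (k.succAbove j) - X i.succ k * ↑p⁻¹ * X 0 (k.succAbove j),
    .of fun j l ↦ Y (k.succAbove j) l.succ, ?_⟩
  ext i l
  have hrow (r : Fin (m + 1)) :
      ∑ j, X r (k.succAbove j) * Y (k.succAbove j) l.succ
        = (1 : Matrix _ _ B) r l.succ - X r k * Y k l.succ := by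
    rw [← hXY, Matrix.mul_apply, Fin.sum_univ_succAbove _ k, add_sub_cancel_left]
  have h0 : (1 : Matrix (Fin (m + 1)) (Fin (m + 1)) B) 0 l.succ = 0 :=
    Matrix.one_apply_ne (Fin.succ_ne_zero l).symm
  have h1 : (1 : Matrix (Fin (m + 1)) (Fin (m + 1)) B) i.succ l.succ
      = (1 : Matrix _ _ B) i l := by
    simp [Matrix.one_apply]
  simp only [Matrix.mul_apply, Matrix.of_apply, sub_mul, Finset.sum_sub_distrib, mul_assoc,
    ← Finset.mul_sum]
  rw [hrow, hrow, h0, h1, ← hp, zero_sub, mul_neg, Units.inv_mul_cancel_left, mul_neg]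
  abel

theorem stmt6 (B : Type*) [Ring B] [Nontrivial B]
    (hloc : ∀ a b : B, a + b = 1 → IsUnit a ∨ IsUnit b)
    (m s : ℕ) (X : Matrix (Fin m) (Fin s) B) (Y : Matrix (Fin s) (Fin m) B)
    (hXY : X * Y = 1) :
    m ≤ s := by
  have : IsLocalRing B := ⟨fun {a b} h ↦ hloc a b h⟩
  induction m generalizing s with
  | zero => exact s.zero_le
  | succ m ih =>
    have h00 : ∑ k, X 0 k * Y k 0 = 1 := by rw [← Matrix.mul_apply, hXY, Matrix.one_apply_eq]
    obtain ⟨k, -, hk⟩ := IsLocalRing.exists_of_isUnit_sum (h00 ▸ isUnit_one)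
    cases s with
    | zero => exact k.elim0
    | succ s =>
      obtain ⟨X', Y', h⟩ := Matrix.exists_mul_eq_one_of_isUnit_pivot hXY k
        (IsLocalRing.isUnit_left_of_isUnit_mul hk)
      exact Nat.succ_le_succ (ih s X' Y' h)
end
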